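/- Let n ≥ 2 and let ε = ±1. Consider the curve-germ in ℝ^{2n} (coordinates (p₁,q₁,p₂,q₂,…,pₙ,qₙ), all unlisted coordinates equal to 0) f(t) = (t⁴, ε·(1/2)t¹⁰, t³, 0, …, 0) (the class E₆^{4,±} of the planar singularity E₆). Then Lt(f) = 11. In particular, together with Lt = 10 for the class E₆³, the Lagrangian tangency order distinguishes the symplectic classes E₆³ and E₆^{4,±}. -/

import Mathlib

noncomputable section

/-- The order of vanishing at `0` of a function `h : ℝ → ℝ`: the least `k ≥ 1` such that
the `k`-th derivative of `h` at `0` is nonzero, and `∞` if all derivatives vanish at `0`. -/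
def vanishOrder (h : ℝ → ℝ) : ℕ∞ :=
  sInf {k : ℕ∞ | ∃ m : ℕ, k = m ∧ 1 ≤ m ∧ iteratedDeriv m h 0 ≠ 0}

/-- The standard symplectic form `ω = ∑ dpᵢ ∧ dqᵢ` on `ℝ^{2n}`, where the coordinates are
ordered as `(p₁, q₁, …, pₙ, qₙ)` (so `pᵢ` has index `2(i-1)` and `qᵢ` has index `2(i-1)+1`). -/
def stdSymp (n : ℕ) (u v : Fin (2 * n) → ℝ) : ℝ :=
  ∑ i : Fin n,
    (u ⟨2 * i.val, by have := i.isLt; omega⟩ * v ⟨2 * i.val + 1, by have := i.isLt; omega⟩ -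
     u ⟨2 * i.val + 1, by have := i.isLt; omega⟩ * v ⟨2 * i.val, by have := i.isLt; omega⟩)

/-- A germ at `0` of a smooth Lagrangian submanifold of `(ℝ^{2n}, ω)`, given by `n` smooth
functions `H₁, …, Hₙ` vanishing at `0`, whose differentials are linearly independent at the
points of `{H₁ = ⋯ = Hₙ = 0}` near `0`, and such that `ω` vanishes on `ker DH(x)` at every
such point. -/
structure LagrangianGerm (n : ℕ) : Type where
  H : Fin n → (Fin (2 * n) → ℝ) → ℝ
  smooth : ∀ i, ContDiff ℝ (⊤ : ℕ∞) (H i)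
  zero_at_zero : ∀ i, H i 0 = 0
  lagrangian : ∃ U : Set (Fin (2 * n) → ℝ), IsOpen U ∧ 0 ∈ U ∧
    ∀ x ∈ U, (∀ i, H i x = 0) →
      LinearIndependent ℝ (fun i => fderiv ℝ (H i) x) ∧
      ∀ u v : Fin (2 * n) → ℝ, (∀ i, fderiv ℝ (H i) x u = 0) →
        (∀ i, fderiv ℝ (H i) x v = 0) → stdSymp n u v = 0

/-- The tangency order `t(f, L)` of a curve `f` to a Lagrangian submanifold-germ `L`:
the minimum over `i` of the order of vanishing at `0` of `Hᵢ ∘ f`. -/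
def tOrd {n : ℕ} (f : ℝ → Fin (2 * n) → ℝ) (L : LagrangianGerm n) : ℕ∞ :=
  ⨅ i : Fin n, vanishOrder (fun t => L.H i (f t))

/-- The Lagrangian tangency order `Lt(f)` of a curve `f`. -/
def Lt1 {n : ℕ} (f : ℝ → Fin (2 * n) → ℝ) : ℕ∞ :=
  ⨆ L : LagrangianGerm n, tOrd f L

/-- The Lagrangian tangency order `Lt(f, g)` of a multi-germ of two curves. -/
def Lt2 {n : ℕ} (f g : ℝ → Fin (2 * n) → ℝ) : ℕ∞ :=
  ⨆ L : LagrangianGerm n, min (tOrd f L) (tOrd g L)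

/-- The Lagrangian tangency order `Lt(f, g, h)` of a multi-germ of three curves. -/
def Lt3 {n : ℕ} (f g h : ℝ → Fin (2 * n) → ℝ) : ℕ∞ :=
  ⨆ L : LagrangianGerm n, min (tOrd f L) (min (tOrd g L) (tOrd h L))

/-!
Let a curve `F (tᵃ, tᵇ)` lie in a surface parametrized by `F`, and let the equations `Hᵢ` of a
Lagrangian germ vanish along it to order `N ≤ ab`. As `a` and `b` are coprime, monomials of weight
less than `ab` have pairwise distinct orders along `(tᵃ, tᵇ)`, so no Taylor coefficient of `Hᵢ ∘ F`
of weight less than `N` survives, and for `b ≤ a` the first derivatives of `Hᵢ ∘ F` are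
`O(t^(N - a))` along the curve. The tangent planes of the surface are therefore this close to
`ker DH`, where `ω` vanishes, so `F^* ω` is `O(t^(N - a))` along the curve as well.

On the surface `q₁ = s(p₁, p₂)` we have `F^* ω = ∂₂s dp₁ ∧ dp₂`. The curves of type `E₆` are
`F (t⁴, t³)` with `s(x, y) = (c/3) y³ + (d/2) xy²`, where `∂₂s` becomes `c t⁶ + d t⁷`: the
Lagrangian tangency order is at most `10` if `c ≠ 0`, and at most `11` if `c = 0`, `d ≠ 0`.
Conversely, if `∂₁σ = s`, then the equations `q = ∇σ(p)` of a Lagrangian germ fail on the curve only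
by `∂₂σ = c t¹⁰ + (d/2) t¹¹`.
-/

open Asymptotics Filter Topology
open scoped ContDiff Nat

/-! ### Orders of vanishing -/

theorem pow_isBigO_pow_nhds_zero {m n : ℕ} (hmn : m ≤ n) :
    (fun t : ℝ ↦ t ^ n) =O[𝓝 0] fun t ↦ t ^ m := by
  obtain ⟨k, rfl⟩ := Nat.exists_eq_add_of_le hmn
  have hk : (fun t : ℝ ↦ t ^ k) =O[𝓝 0] fun _ ↦ (1 : ℝ) :=
    (continuous_pow k).continuousAt.isBigO_one ℝ
  simpa [pow_add] using (isBigO_refl (fun t : ℝ ↦ t ^ m) (𝓝 0)).mul hk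

theorem isBigO_pow_succ_of_deriv {h : ℝ → ℝ} {n : ℕ} (hd : Differentiable ℝ h) (h0 : h 0 = 0)
    (hO : deriv h =O[𝓝 0] fun t ↦ t ^ n) : h =O[𝓝 0] fun t ↦ t ^ (n + 1) := by
  obtain ⟨C, hC0, hC⟩ := hO.exists_nonneg
  obtain ⟨r, hr, hball⟩ := Metric.eventually_nhds_iff_ball.1 hC.bound
  refine .of_bound C ?_
  filter_upwards [Metric.ball_mem_nhds 0 hr] with t ht
  have hbound : ∀ x ∈ Metric.closedBall (0 : ℝ) ‖t‖, ‖deriv h x‖ ≤ C * ‖t‖ ^ n := fun x hx ↦ by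
    rw [mem_closedBall_zero_iff] at hx
    calc ‖deriv h x‖ ≤ C * ‖x ^ n‖ := hball x (by simpa using hx.trans_lt (by simpa using ht))
      _ ≤ C * ‖t‖ ^ n := by rw [norm_pow]; gcongr
  calc ‖h t‖ = ‖h t - h 0‖ := by rw [h0, sub_zero]
    _ ≤ C * ‖t‖ ^ n * ‖t - 0‖ :=
        (convex_closedBall 0 ‖t‖).norm_image_sub_le_of_norm_deriv_le (fun x _ ↦ hd x) hbound
          (by simp) (by simp)
    _ = C * ‖t ^ (n + 1)‖ := by rw [sub_zero, norm_pow, pow_succ, mul_assoc]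

theorem eq_zero_of_const_mul_pow_isBigO {c : ℝ} {n : ℕ}
    (h : (fun t : ℝ ↦ c * t ^ n) =O[𝓝 0] fun t ↦ t ^ (n + 1)) : c = 0 := by
  by_contra hc
  have hlittle : (fun t : ℝ ↦ t ^ n) =o[𝓝[≠] 0] fun t ↦ t ^ n :=
    (((isBigO_const_mul_left_iff hc).1 h).trans_isLittleO (isLittleO_pow_pow n.lt_succ_self)).mono
      nhdsWithin_le_nhds
  have hne : ∀ᶠ t : ℝ in 𝓝[≠] 0, t ^ n ≠ 0 :=
    eventually_mem_nhdsWithin.mono fun t ht ↦ pow_ne_zero n ht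
  exact isLittleO_irrefl hne.frequently hlittle

theorem isBigO_pow_of_iteratedDeriv_eq_zero {N : ℕ} {h : ℝ → ℝ} (hh : ContDiff ℝ ∞ h)
    (hN : ∀ k < N, iteratedDeriv k h 0 = 0) : h =O[𝓝 0] fun t ↦ t ^ N := by
  induction N generalizing h with
  | zero => simpa using hh.continuous.continuousAt.isBigO_one ℝ
  | succ N ih =>
    refine isBigO_pow_succ_of_deriv (hh.differentiable (by simp)) (hN 0 N.succ_pos)
      (ih hh.deriv' fun k hk ↦ ?_)
    rw [← iteratedDeriv_succ']
    exact hN _ (by lia)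

theorem isBigO_pow_iff_iteratedDeriv_eq_zero {N : ℕ} {h : ℝ → ℝ} (hh : ContDiff ℝ ∞ h) :
    (h =O[𝓝 0] fun t ↦ t ^ N) ↔ ∀ k < N, iteratedDeriv k h 0 = 0 := by
  refine ⟨fun hO ↦ ?_, isBigO_pow_of_iteratedDeriv_eq_zero hh⟩
  induction N with
  | zero => simp
  | succ N ih =>
    have hlow : ∀ k < N, iteratedDeriv k h 0 = 0 :=
      ih (hO.trans (pow_isBigO_pow_nhds_zero N.le_succ))
    have hrest := isBigO_pow_of_iteratedDeriv_eq_zero (N := N + 1)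
      (h := fun t ↦ h t - iteratedDeriv N h 0 / N ! * t ^ N) (by fun_prop) fun k hk ↦ by
        rw [iteratedDeriv_fun_sub (contDiff_infty.1 hh k).contDiffAt (by fun_prop),
          iteratedDeriv_const_mul_field, iteratedDeriv_fun_pow_zero]
        rcases (Nat.lt_succ_iff.1 hk).lt_or_eq with hlt | rfl
        · simp [hlow k hlt, hlt.ne]
        · simp [Nat.factorial_ne_zero]
    have hcoeff : iteratedDeriv N h 0 / N ! = 0 :=
      eq_zero_of_const_mul_pow_isBigO ((hO.sub hrest).congr_left fun t ↦ by ring)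
    have htop : iteratedDeriv N h 0 = 0 := by
      simpa [Nat.factorial_ne_zero] using hcoeff
    intro k hk
    rcases (Nat.lt_succ_iff.1 hk).lt_or_eq with hlt | rfl
    exacts [hlow k hlt, htop]

/-! ### Weighted Taylor coefficients along a monomial curve -/

section DirectionalDerivatives

variable {E : Type*} [NormedAddCommGroup E] [NormedSpace ℝ E]

/-- The derivative of `K` in the constant direction `v`, as an operator on functions that can be
iterated. -/
def dirDeriv (v : E) (K : E → ℝ) : E → ℝ := fun z ↦ fderiv ℝ K z v

theorem contDiff_dirDeriv {K : E → ℝ} (v : E) (hK : ContDiff ℝ ∞ K) :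
    ContDiff ℝ ∞ (dirDeriv v K) :=
  (hK.fderiv_right (by simp)).clm_apply contDiff_const

theorem contDiff_iterate_dirDeriv {K : E → ℝ} (v : E) (hK : ContDiff ℝ ∞ K) (i : ℕ) :
    ContDiff ℝ ∞ ((dirDeriv v)^[i] K) := by
  induction i generalizing K with
  | zero => exact hK
  | succ _ ih => exact ih (contDiff_dirDeriv v hK)

theorem fderiv_dirDeriv {K : E → ℝ} (hK : ContDiff ℝ ∞ K) (v z w : E) :
    fderiv ℝ (dirDeriv v K) z w = fderiv ℝ (fderiv ℝ K) z w v := by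
  have hd : DifferentiableAt ℝ (fderiv ℝ K) z :=
    (hK.fderiv_right (m := ∞) (by simp)).differentiable (by simp) z
  unfold dirDeriv
  rw [fderiv_clm_apply hd (differentiableAt_const v)]
  simp

theorem dirDeriv_comm {K : E → ℝ} (hK : ContDiff ℝ ∞ K) (v w : E) :
    dirDeriv v (dirDeriv w K) = dirDeriv w (dirDeriv v K) := by
  funext z
  have hsymm : IsSymmSndFDerivAt ℝ K z :=
    hK.contDiffAt.isSymmSndFDerivAt (by
      rw [minSmoothness_of_isRCLikeNormedField]
      exact WithTop.coe_le_coe.2 le_top)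
  exact (fderiv_dirDeriv hK w z v).trans ((hsymm v w).trans (fderiv_dirDeriv hK v z w).symm)

theorem iterate_dirDeriv_comm {K : E → ℝ} (hK : ContDiff ℝ ∞ K) (v w : E) (j : ℕ) :
    (dirDeriv w)^[j] (dirDeriv v K) = dirDeriv v ((dirDeriv w)^[j] K) := by
  induction j generalizing K with
  | zero => rfl
  | succ j ih =>
    rw [Function.iterate_succ_apply, dirDeriv_comm hK, ih (contDiff_dirDeriv w hK),
      Function.iterate_succ_apply]

theorem dirDeriv_sub_const_mul {K M : E → ℝ} (hK : Differentiable ℝ K) (hM : Differentiable ℝ M)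
    (c : ℝ) (v : E) :
    dirDeriv v (fun z ↦ K z - c * M z) = fun z ↦ dirDeriv v K z - c * dirDeriv v M z := by
  funext z
  simp [dirDeriv, fderiv_fun_sub (hK z) ((hM z).const_mul c), fderiv_const_mul (hM z)]

theorem iterate_dirDeriv_sub_const_mul {K M : E → ℝ} (hK : ContDiff ℝ ∞ K) (hM : ContDiff ℝ ∞ M)
    (c : ℝ) (v : E) (i : ℕ) :
    (dirDeriv v)^[i] (fun z ↦ K z - c * M z) =
      fun z ↦ (dirDeriv v)^[i] K z - c * (dirDeriv v)^[i] M z := by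
  induction i generalizing K M with
  | zero => rfl
  | succ i ih =>
    simp only [Function.iterate_succ_apply]
    rw [dirDeriv_sub_const_mul (hK.differentiable (by simp)) (hM.differentiable (by simp)),
      ih (contDiff_dirDeriv v hK) (contDiff_dirDeriv v hM)]

end DirectionalDerivatives

/-- The mixed partial derivative `∂₁ⁱ∂₂ʲK` of a function of two variables. -/
def mixedPartial (i j : ℕ) (K : ℝ × ℝ → ℝ) : ℝ × ℝ → ℝ :=
  (dirDeriv (1, 0))^[i] ((dirDeriv (0, 1))^[j] K)

theorem mixedPartial_dirDeriv_fst {K : ℝ × ℝ → ℝ} (hK : ContDiff ℝ ∞ K) (i j : ℕ) :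
    mixedPartial i j (dirDeriv (1, 0) K) = mixedPartial (i + 1) j K := by
  rw [mixedPartial, iterate_dirDeriv_comm hK, ← Function.iterate_succ_apply, mixedPartial]

theorem mixedPartial_dirDeriv_snd (K : ℝ × ℝ → ℝ) (i j : ℕ) :
    mixedPartial i j (dirDeriv (0, 1) K) = mixedPartial i (j + 1) K := rfl

theorem mixedPartial_sub_const_mul {K M : ℝ × ℝ → ℝ} (hK : ContDiff ℝ ∞ K) (hM : ContDiff ℝ ∞ M)
    (c : ℝ) (i j : ℕ) :
    mixedPartial i j (fun z ↦ K z - c * M z) =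
      fun z ↦ mixedPartial i j K z - c * mixedPartial i j M z := by
  rw [mixedPartial, iterate_dirDeriv_sub_const_mul hK hM, iterate_dirDeriv_sub_const_mul
    (contDiff_iterate_dirDeriv _ hK j) (contDiff_iterate_dirDeriv _ hM j)]
  rfl

theorem dirDeriv_const_mul_monomial (v : ℝ × ℝ) (c : ℝ) (k l : ℕ) :
    dirDeriv v (fun z : ℝ × ℝ ↦ c * (z.1 ^ k * z.2 ^ l)) = fun z ↦
      c * (k * (z.1 ^ (k - 1) * z.2 ^ l) * v.1 + l * (z.1 ^ k * z.2 ^ (l - 1)) * v.2) := by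
  funext z
  have h : HasFDerivAt (fun z : ℝ × ℝ ↦ c * (z.1 ^ k * z.2 ^ l)) _ z :=
    (((ContinuousLinearMap.fst ℝ ℝ ℝ).hasFDerivAt.pow k).mul
      ((ContinuousLinearMap.snd ℝ ℝ ℝ).hasFDerivAt.pow l)).const_mul c
  rw [dirDeriv, h.fderiv]
  simp only [ContinuousLinearMap.coe_fst', ContinuousLinearMap.coe_snd', nsmul_eq_mul, smul_add,
    add_apply, smul_apply, smul_eq_mul]
  ring

theorem mixedPartial_monomial (i j k l : ℕ) :
    mixedPartial i j (fun z : ℝ × ℝ ↦ z.1 ^ k * z.2 ^ l) = fun z ↦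
      ((k.descFactorial i * l.descFactorial j : ℕ) : ℝ) * (z.1 ^ (k - i) * z.2 ^ (l - j)) := by
  have hj : (dirDeriv (0, 1))^[j] (fun z : ℝ × ℝ ↦ z.1 ^ k * z.2 ^ l) =
      fun z ↦ (l.descFactorial j : ℝ) * (z.1 ^ k * z.2 ^ (l - j)) := by
    induction j with
    | zero => simp
    | succ j ih =>
      rw [Function.iterate_succ_apply', ih, dirDeriv_const_mul_monomial, Nat.descFactorial_succ]
      funext z
      push_cast
      rw [Nat.sub_sub]
      ring
  rw [mixedPartial, hj]
  induction i with
  | zero => simp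
  | succ i ih =>
    rw [Function.iterate_succ_apply', ih, dirDeriv_const_mul_monomial, Nat.descFactorial_succ]
    funext z
    push_cast
    rw [Nat.sub_sub]
    ring

theorem mixedPartial_monomial_self_zero (i j : ℕ) :
    mixedPartial i j (fun z : ℝ × ℝ ↦ z.1 ^ i * z.2 ^ j) 0 = ↑(i ! * j !) := by
  simp [mixedPartial_monomial, Nat.descFactorial_self]

theorem mixedPartial_monomial_zero_of_ne {i j k l : ℕ} (h : i ≠ k ∨ j ≠ l) :
    mixedPartial i j (fun z : ℝ × ℝ ↦ z.1 ^ k * z.2 ^ l) 0 = 0 := by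
  have hcases : k < i ∨ l < j ∨ k - i ≠ 0 ∨ l - j ≠ 0 := by lia
  rw [mixedPartial_monomial]
  rcases hcases with h | h | h | h
  · simp [Nat.descFactorial_of_lt h]
  · simp [Nat.descFactorial_of_lt h]
  · simp [h]
  · simp [h]

theorem deriv_comp_monomialCurve {K : ℝ × ℝ → ℝ} (hK : Differentiable ℝ K) (a b : ℕ) :
    deriv (fun t : ℝ ↦ K (t ^ a, t ^ b)) = fun t ↦
      a * t ^ (a - 1) * dirDeriv (1, 0) K (t ^ a, t ^ b) +
        b * t ^ (b - 1) * dirDeriv (0, 1) K (t ^ a, t ^ b) := by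
  funext t
  have hcurve := (hasDerivAt_pow a t).prodMk (hasDerivAt_pow b t)
  have hsplit : (a * t ^ (a - 1), b * t ^ (b - 1)) =
      (a * t ^ (a - 1)) • ((1 : ℝ), (0 : ℝ)) + (b * t ^ (b - 1)) • ((0 : ℝ), (1 : ℝ)) := by simp
  have hcomp : HasDerivAt (fun t : ℝ ↦ K (t ^ a, t ^ b)) _ t :=
    (hK (t ^ a, t ^ b)).hasFDerivAt.comp_hasDerivAt t hcurve
  rw [hcomp.deriv, hsplit, map_add, map_smul, map_smul]
  rfl

theorem eq_and_eq_of_weight_eq {a b i j k l : ℕ} (hab : a.Coprime b) (hlt : a * i + b * j < a * b)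
    (h : a * k + b * l = a * i + b * j) : k = i ∧ l = j := by
  have hb : 0 < b := Nat.pos_of_mul_pos_left (Nat.zero_lt_of_lt hlt)
  have hmod : k ≡ i [MOD b] := by
    refine Nat.ModEq.cancel_left_of_coprime hab.symm ?_
    simpa [Nat.ModEq] using congrArg (· % b) h
  have hk : k < b := lt_of_mul_lt_mul_left (by lia : a * k < a * b) a.zero_le
  have hi : i < b := lt_of_mul_lt_mul_left (by lia : a * i < a * b) a.zero_le
  obtain rfl := hmod.eq_of_lt_of_lt hk hi
  exact ⟨rfl, Nat.eq_of_mul_eq_mul_left hb (by lia)⟩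

/-- All Taylor coefficients of `K` at the origin of weight less than `N` vanish, where the two
variables have weights `a` and `b`. -/
def WeightedFlat (a b N : ℕ) (K : ℝ × ℝ → ℝ) : Prop :=
  ∀ i j, a * i + b * j < N → mixedPartial i j K 0 = 0

namespace WeightedFlat

variable {a b N : ℕ} {K : ℝ × ℝ → ℝ}

theorem dirDeriv_fst (h : WeightedFlat a b N K) (hK : ContDiff ℝ ∞ K) :
    WeightedFlat a b (N - a) (dirDeriv (1, 0) K) := fun i j hij ↦ by
  rw [mixedPartial_dirDeriv_fst hK]
  exact h _ _ (by rw [mul_add]; lia)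

theorem dirDeriv_snd (h : WeightedFlat a b N K) :
    WeightedFlat a b (N - b) (dirDeriv (0, 1) K) := fun i j hij ↦ by
  rw [mixedPartial_dirDeriv_snd]
  exact h _ _ (by rw [mul_add]; lia)

theorem comp_monomialCurve_isBigO (ha : 0 < a) (hb : 0 < b) (hK : ContDiff ℝ ∞ K)
    (h : WeightedFlat a b N K) : (fun t : ℝ ↦ K (t ^ a, t ^ b)) =O[𝓝 0] fun t ↦ t ^ N := by
  induction N using Nat.strong_induction_on generalizing K with
  | _ N ih =>
  have hsmooth : ContDiff ℝ ∞ fun t : ℝ ↦ K (t ^ a, t ^ b) := by fun_prop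
  obtain _ | N := N
  · simpa using hsmooth.continuous.continuousAt.isBigO_one ℝ
  have hterm : ∀ {c : ℕ} {M : ℝ × ℝ → ℝ}, 0 < c → ContDiff ℝ ∞ M →
      WeightedFlat a b (N + 1 - c) M →
      (fun t : ℝ ↦ c * t ^ (c - 1) * M (t ^ a, t ^ b)) =O[𝓝 0] fun t ↦ t ^ N := by
    intro c M hc hM hflat
    have := ((isBigO_refl (fun t : ℝ ↦ t ^ (c - 1)) (𝓝 0)).const_mul_left (c : ℝ)).mul
      (ih (N + 1 - c) (by lia) hM hflat)
    simp only [← pow_add] at this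
    exact this.trans (pow_isBigO_pow_nhds_zero (by lia))
  refine isBigO_pow_succ_of_deriv (hsmooth.differentiable (by simp)) ?_ ?_
  · rw [zero_pow ha.ne', zero_pow hb.ne']
    exact h 0 0 (by simp)
  · rw [deriv_comp_monomialCurve (hK.differentiable (by simp))]
    exact (hterm ha (contDiff_dirDeriv _ hK) (h.dirDeriv_fst hK)).add
      (hterm hb (contDiff_dirDeriv _ hK) h.dirDeriv_snd)

theorem sub_monomial {i j : ℕ} (hab : a.Coprime b) (hlt : a * i + b * j < a * b)
    (hK : ContDiff ℝ ∞ K) (h : WeightedFlat a b (a * i + b * j) K) :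
    WeightedFlat a b (a * i + b * j + 1)
      fun z ↦ K z - mixedPartial i j K 0 / ↑(i ! * j !) * (z.1 ^ i * z.2 ^ j) := by
  intro k l hkl
  have hmonomial : ContDiff ℝ ∞ fun z : ℝ × ℝ ↦ z.1 ^ i * z.2 ^ j := by fun_prop
  simp only [mixedPartial_sub_const_mul hK hmonomial]
  by_cases hkl' : k = i ∧ l = j
  · obtain ⟨rfl, rfl⟩ := hkl'
    have : ((k ! * l ! : ℕ) : ℝ) ≠ 0 := by positivity
    rw [mixedPartial_monomial_self_zero, div_mul_cancel₀ _ this, sub_self]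
  · have hlt' : a * k + b * l < a * i + b * j :=
      lt_of_le_of_ne (Nat.lt_succ_iff.1 hkl) fun heq ↦ hkl' (eq_and_eq_of_weight_eq hab hlt heq)
    rw [mixedPartial_monomial_zero_of_ne (not_and_or.1 hkl'), h k l hlt', mul_zero, sub_zero]

theorem of_comp_monomialCurve_isBigO (hab : a.Coprime b) (hN : N ≤ a * b)
    (hK : ContDiff ℝ ∞ K)
    (h : (fun t : ℝ ↦ K (t ^ a, t ^ b)) =O[𝓝 0] fun t ↦ t ^ N) : WeightedFlat a b N K := by
  induction N with
  | zero => exact fun _ _ hij ↦ absurd hij (Nat.not_lt_zero _)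
  | succ N ih =>
  obtain ⟨ha, hb⟩ : 0 < a ∧ 0 < b := CanonicallyOrderedAdd.mul_pos.1 (by lia)
  have hflat : WeightedFlat a b N K :=
    ih (by lia) (h.trans (pow_isBigO_pow_nhds_zero N.le_succ))
  intro i j hij
  rcases (Nat.lt_succ_iff.1 hij).lt_or_eq with hlt | rfl
  · exact hflat i j hlt
  have hrest := (hflat.sub_monomial hab (by lia) hK).comp_monomialCurve_isBigO ha hb
    (by fun_prop)
  have hcoeff : mixedPartial i j K 0 / ↑(i ! * j !) = 0 := by
    refine eq_zero_of_const_mul_pow_isBigO ((h.sub hrest).congr_left fun t ↦ ?_)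
    ring
  have : ((i ! * j ! : ℕ) : ℝ) ≠ 0 := by positivity
  exact (div_eq_zero_iff.1 hcoeff).resolve_right this

end WeightedFlat

section MonomialCurve

variable {a b N : ℕ} {K : ℝ × ℝ → ℝ}

theorem dirDeriv_fst_comp_monomialCurve_isBigO (ha : 0 < a) (hb : 0 < b) (hab : a.Coprime b)
    (hN : N ≤ a * b) (hK : ContDiff ℝ ∞ K)
    (h : (fun t : ℝ ↦ K (t ^ a, t ^ b)) =O[𝓝 0] fun t ↦ t ^ N) :
    (fun t : ℝ ↦ dirDeriv (1, 0) K (t ^ a, t ^ b)) =O[𝓝 0] fun t ↦ t ^ (N - a) :=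
  ((WeightedFlat.of_comp_monomialCurve_isBigO hab hN hK h).dirDeriv_fst hK
    ).comp_monomialCurve_isBigO ha hb (contDiff_dirDeriv _ hK)

theorem dirDeriv_snd_comp_monomialCurve_isBigO (ha : 0 < a) (hb : 0 < b) (hab : a.Coprime b)
    (hN : N ≤ a * b) (hK : ContDiff ℝ ∞ K)
    (h : (fun t : ℝ ↦ K (t ^ a, t ^ b)) =O[𝓝 0] fun t ↦ t ^ N) :
    (fun t : ℝ ↦ dirDeriv (0, 1) K (t ^ a, t ^ b)) =O[𝓝 0] fun t ↦ t ^ (N - b) :=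
  (WeightedFlat.of_comp_monomialCurve_isBigO hab hN hK h).dirDeriv_snd.comp_monomialCurve_isBigO
    ha hb (contDiff_dirDeriv _ hK)

end MonomialCurve

/-! ### Bilinear forms near an isotropic zero set -/

section Isotropy

variable {E F : Type*} [NormedAddCommGroup E] [NormedSpace ℝ E] [CompleteSpace E]
  [NormedAddCommGroup F] [NormedSpace ℝ F] [CompleteSpace F]

theorem exists_zero_of_approximatesLinearOn {A : E →L[ℝ] F} (hA : Function.Surjective A) :
    ∃ C : ℝ, 0 < C ∧ ∃ c : NNReal, 0 < c ∧ ∀ (G : E → F) (s : Set E) (x : E),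
      ApproximatesLinearOn G A s c → Metric.closedBall x (C * ‖G x‖) ⊆ s →
        ∃ z, G z = 0 ∧ ‖z - x‖ ≤ C * ‖G x‖ := by
  let S := A.nonlinearRightInverseOfSurjective (LinearMap.range_eq_top.2 hA)
  have hS : (0 : ℝ) < S.nnnorm := A.nonlinearRightInverseOfSurjective_nnnorm_pos _
  refine ⟨2 * S.nnnorm, by positivity, S.nnnorm⁻¹ / 2, div_pos (inv_pos.2 hS) two_pos, ?_⟩
  intro G s x hG hs
  have hsurj := hG.surjOn_closedBall_of_nonlinearRightInverse S (by positivity) hs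
  have hmem : (0 : F) ∈ Metric.closedBall (G x)
      (((S.nnnorm : ℝ)⁻¹ - (S.nnnorm⁻¹ / 2 : NNReal)) * (2 * S.nnnorm * ‖G x‖)) := by
    rw [mem_closedBall_iff_norm, zero_sub, norm_neg]
    refine le_of_eq ?_
    push_cast
    field_simp
    ring
  obtain ⟨z, hz, hz0⟩ := hsurj hmem
  exact ⟨z, hz0, mem_closedBall_iff_norm.1 hz⟩

theorem eventually_exists_mem_ker_norm_sub_le {A : E →L[ℝ] F} (hA : Function.Surjective A) :
    ∃ C : ℝ, 0 < C ∧ ∀ᶠ B in 𝓝 A, ∀ u, ∃ u', B u' = 0 ∧ ‖u' - u‖ ≤ C * ‖B u‖ := by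
  obtain ⟨C, hC, c, hc, hzero⟩ := exists_zero_of_approximatesLinearOn hA
  refine ⟨C, hC, ?_⟩
  filter_upwards [Metric.ball_mem_nhds A hc] with B hB u
  refine hzero B Set.univ u (fun x _ y _ ↦ ?_) (Set.subset_univ _)
  rw [← map_sub, ← sub_apply]
  exact ((B - A).le_opNorm _).trans (by gcongr; exact (mem_ball_iff_norm.1 hB).le)

theorem exists_retraction_onto_zeros {H : E → F} {A : E →L[ℝ] F} {x₀ : E}
    (hH : HasStrictFDerivAt H A x₀) (hA : Function.Surjective A) (h0 : H x₀ = 0) :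
    ∃ C : ℝ, 0 ≤ C ∧ ∃ ρ : E → E, Tendsto ρ (𝓝 x₀) (𝓝 x₀) ∧
      ∀ᶠ x in 𝓝 x₀, H (ρ x) = 0 ∧ ‖ρ x - x‖ ≤ C * ‖H x‖ := by
  obtain ⟨C, hC, c, hc, hzero⟩ := exists_zero_of_approximatesLinearOn hA
  obtain ⟨s, hs, happrox⟩ := hH.approximates_deriv_on_nhds (c := c) (Or.inr hc)
  obtain ⟨r, hr, hball⟩ := Metric.mem_nhds_iff.1 hs
  have hHlim : Tendsto (fun x ↦ C * ‖H x‖) (𝓝 x₀) (𝓝 0) := by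
    simpa [h0] using hH.continuousAt.tendsto.norm.const_mul C
  have hsmall : ∀ᶠ x in 𝓝 x₀, C * ‖H x‖ + dist x x₀ < r := by
    refine (hHlim.add (tendsto_id.dist tendsto_const_nhds)).eventually_lt_const ?_
    simpa using hr
  have hex : ∀ᶠ x in 𝓝 x₀, ∃ z, H z = 0 ∧ ‖z - x‖ ≤ C * ‖H x‖ := hsmall.mono fun x hx ↦
    hzero H s x happrox ((Metric.closedBall_subset_ball' hx).trans hball)
  obtain ⟨ρ, hρ⟩ := hex.choice
  refine ⟨C, hC.le, ρ, ?_, hρ⟩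
  have hdiff : Tendsto (fun x ↦ ρ x - x) (𝓝 x₀) (𝓝 0) :=
    squeeze_zero_norm' (hρ.mono fun x hx ↦ hx.2) hHlim
  simpa using hdiff.add tendsto_id

theorem eventually_abs_bilin_le_of_ker_isotropic (Ω : E →L[ℝ] E →L[ℝ] ℝ) {A : E →L[ℝ] F}
    (hA : Function.Surjective A) :
    ∃ C : ℝ, 0 ≤ C ∧ ∀ᶠ B in 𝓝 A, (∀ u v, B u = 0 → B v = 0 → Ω u v = 0) →
      ∀ u v, |Ω u v| ≤ C * (‖B u‖ * ‖v‖ + ‖u‖ * ‖B v‖) := by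
  obtain ⟨C, hC, hker⟩ := eventually_exists_mem_ker_norm_sub_le hA
  have hbdd : ∀ᶠ B in 𝓝 A, ‖B‖ < ‖A‖ + 1 :=
    continuous_norm.continuousAt.eventually_lt_const (lt_add_one _)
  refine ⟨‖Ω‖ * C * (1 + C * (‖A‖ + 1)), by positivity, ?_⟩
  filter_upwards [hker, hbdd] with B hB hBA hiso u v
  obtain ⟨u', hu', hu⟩ := hB u
  obtain ⟨v', hv', hv⟩ := hB v
  have hsplit : Ω u v = Ω u (v - v') + Ω (u - u') v - Ω (u - u') (v - v') := by
    simp [hiso u' v' hu' hv']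
  have hBu : ‖B u‖ ≤ (‖A‖ + 1) * ‖u‖ := (B.le_opNorm u).trans (by gcongr)
  rw [norm_sub_rev] at hu hv
  calc |Ω u v|
      ≤ ‖Ω u (v - v')‖ + ‖Ω (u - u') v‖ + ‖Ω (u - u') (v - v')‖ := by
        rw [hsplit, ← Real.norm_eq_abs]
        exact norm_sub_le_of_le (norm_add_le _ _) le_rfl
    _ ≤ ‖Ω‖ * ‖u‖ * (C * ‖B v‖) + ‖Ω‖ * (C * ‖B u‖) * ‖v‖ +
          ‖Ω‖ * (C * ((‖A‖ + 1) * ‖u‖)) * (C * ‖B v‖) := by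
        gcongr
        · exact (Ω.le_opNorm₂ _ _).trans (by gcongr)
        · exact (Ω.le_opNorm₂ _ _).trans (by gcongr)
        · exact (Ω.le_opNorm₂ _ _).trans (by gcongr; exact hu.trans (by gcongr))
    _ ≤ ‖Ω‖ * C * (1 + C * (‖A‖ + 1)) * (‖B u‖ * ‖v‖ + ‖u‖ * ‖B v‖) := by
        have : 0 ≤ ‖Ω‖ * C * (C * (‖A‖ + 1)) * (‖B u‖ * ‖v‖) := by positivity
        linarith

theorem eventually_abs_bilin_le_of_isotropic (Ω : E →L[ℝ] E →L[ℝ] ℝ) {H : E → F} {x₀ : E}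
    (hH : ContDiffAt ℝ 2 H x₀) (hsurj : Function.Surjective (fderiv ℝ H x₀)) (h0 : H x₀ = 0)
    (hiso : ∀ᶠ x in 𝓝 x₀, H x = 0 → ∀ u v, fderiv ℝ H x u = 0 → fderiv ℝ H x v = 0 → Ω u v = 0) :
    ∃ C : ℝ, ∀ᶠ x in 𝓝 x₀, ∀ u v, |Ω u v| ≤
      C * (‖H x‖ * ‖u‖ * ‖v‖ + ‖fderiv ℝ H x u‖ * ‖v‖ + ‖u‖ * ‖fderiv ℝ H x v‖) := by
  obtain ⟨C₁, hC₁, ρ, hρ, hzero⟩ :=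
    exists_retraction_onto_zeros (hH.hasStrictFDerivAt (by simp)) hsurj h0
  obtain ⟨C₂, hC₂, hker⟩ := eventually_abs_bilin_le_of_ker_isotropic Ω hsurj
  have hD : ContDiffAt ℝ 1 (fderiv ℝ H) x₀ := hH.fderiv_right (by norm_num)
  obtain ⟨K, s, hs, hlip⟩ := hD.exists_lipschitzOnWith
  refine ⟨C₂ * (1 + 2 * (K * C₁)), ?_⟩
  filter_upwards [hzero, hs, hρ.eventually_mem hs, hρ.eventually hiso,
    (hD.continuousAt.tendsto.comp hρ).eventually hker] with x ⟨hx0, hρx⟩ hxs hρs hxiso hxker u v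
  have hDρ : ∀ w, ‖fderiv ℝ H (ρ x) w‖ ≤ ‖fderiv ℝ H x w‖ + K * C₁ * ‖H x‖ * ‖w‖ := fun w ↦
    calc ‖fderiv ℝ H (ρ x) w‖
        ≤ ‖fderiv ℝ H x w‖ + ‖(fderiv ℝ H (ρ x) - fderiv ℝ H x) w‖ := by
          simpa using norm_add_le (fderiv ℝ H x w) ((fderiv ℝ H (ρ x) - fderiv ℝ H x) w)
      _ ≤ ‖fderiv ℝ H x w‖ + K * (C₁ * ‖H x‖) * ‖w‖ := by
          gcongr
          refine (ContinuousLinearMap.le_opNorm _ _).trans ?_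
          gcongr
          exact (hlip.norm_sub_le hρs hxs).trans (by gcongr)
      _ = _ := by ring
  calc |Ω u v|
      ≤ C₂ * (‖fderiv ℝ H (ρ x) u‖ * ‖v‖ + ‖u‖ * ‖fderiv ℝ H (ρ x) v‖) :=
        hxker (hxiso hx0) u v
    _ ≤ C₂ * ((‖fderiv ℝ H x u‖ + K * C₁ * ‖H x‖ * ‖u‖) * ‖v‖ +
          ‖u‖ * (‖fderiv ℝ H x v‖ + K * C₁ * ‖H x‖ * ‖v‖)) := by gcongr <;> exact hDρ _
    _ = C₂ * ((‖fderiv ℝ H x u‖ * ‖v‖ + ‖u‖ * ‖fderiv ℝ H x v‖) +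
          2 * (K * C₁) * (‖H x‖ * ‖u‖ * ‖v‖)) := by ring
    _ ≤ C₂ * (1 + 2 * (K * C₁)) * (‖H x‖ * ‖u‖ * ‖v‖ + ‖fderiv ℝ H x u‖ * ‖v‖ +
          ‖u‖ * ‖fderiv ℝ H x v‖) := by
        rw [mul_assoc C₂]
        refine mul_le_mul_of_nonneg_left ?_ hC₂
        have hX : 0 ≤ ‖H x‖ * ‖u‖ * ‖v‖ := by positivity
        have hY : 0 ≤ 2 * (K * C₁) * (‖fderiv ℝ H x u‖ * ‖v‖ + ‖u‖ * ‖fderiv ℝ H x v‖) := by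
          positivity
        linarith

end Isotropy

theorem surjective_pi_of_linearIndependent {𝕜 ι E : Type*} [NontriviallyNormedField 𝕜] [Finite ι]
    [NormedAddCommGroup E] [NormedSpace 𝕜 E]
    {l : ι → E →L[𝕜] 𝕜} (h : LinearIndependent 𝕜 l) :
    Function.Surjective (ContinuousLinearMap.pi l) := by
  classical
  have := Fintype.ofFinite ι
  refine LinearMap.range_eq_top.1 ?_
  by_contra hne
  obtain ⟨f, hf, hrange⟩ := Submodule.exists_le_ker_of_lt_top _ (lt_top_iff_ne_top.2 hne)
  have hrel : ∀ i, f (fun j ↦ if i = j then 1 else 0) = 0 := by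
    refine Fintype.linearIndependent_iff.1 h _ (ContinuousLinearMap.ext fun x ↦ ?_)
    have hx : f (ContinuousLinearMap.pi l x) = 0 := hrange ⟨x, rfl⟩
    rw [LinearMap.pi_apply_eq_sum_univ f] at hx
    simpa [mul_comm] using hx
  refine hf (LinearMap.ext fun y ↦ ?_)
  simp [LinearMap.pi_apply_eq_sum_univ f y, hrel]

/-! ### Upper bounds for the tangency order -/

theorem le_vanishOrder_iff {h : ℝ → ℝ} {N : ℕ} :
    (N : ℕ∞) ≤ vanishOrder h ↔ ∀ k, 1 ≤ k → k < N → iteratedDeriv k h 0 = 0 := by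
  refine ⟨fun hN k hk hkN ↦ by_contra fun hne ↦ ?_, fun hN ↦ le_sInf ?_⟩
  · exact hkN.not_ge (Nat.cast_le.1 (hN.trans (sInf_le ⟨k, rfl, hk, hne⟩)))
  · rintro _ ⟨k, rfl, hk, hne⟩
    exact Nat.cast_le.2 (not_lt.1 fun hkN ↦ hne (hN k hk hkN))

theorem le_vanishOrder_iff_isBigO {h : ℝ → ℝ} (hh : ContDiff ℝ ∞ h) (h0 : h 0 = 0) {N : ℕ} :
    (N : ℕ∞) ≤ vanishOrder h ↔ h =O[𝓝 0] fun t ↦ t ^ N := by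
  rw [le_vanishOrder_iff, isBigO_pow_iff_iteratedDeriv_eq_zero hh]
  refine ⟨fun hN k hk ↦ ?_, fun hN k _ ↦ hN k⟩
  rcases k.eq_zero_or_pos with rfl | hpos
  · rwa [iteratedDeriv_zero]
  · exact hN k hpos hk

theorem le_tOrd_iff_isBigO {n N : ℕ} {f : ℝ → Fin (2 * n) → ℝ} (hf : ContDiff ℝ ∞ f)
    (hf0 : f 0 = 0) (L : LagrangianGerm n) :
    (N : ℕ∞) ≤ tOrd f L ↔ ∀ i, (fun t ↦ L.H i (f t)) =O[𝓝 0] fun t ↦ t ^ N := by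
  rw [tOrd, le_iInf_iff]
  refine forall_congr' fun i ↦ le_vanishOrder_iff_isBigO ((L.smooth i).comp hf) ?_
  exact (congrArg (L.H i) hf0).trans (L.zero_at_zero i)

/-- The momentum coordinates `(p₁, …, pₙ)` on `ℝ^{2n}`. -/
def momentum (n : ℕ) : (Fin (2 * n) → ℝ) →L[ℝ] Fin n → ℝ :=
  .pi fun i ↦ .proj ⟨2 * i, by lia⟩

/-- The position coordinates `(q₁, …, qₙ)` on `ℝ^{2n}`. -/
def position (n : ℕ) : (Fin (2 * n) → ℝ) →L[ℝ] Fin n → ℝ :=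
  .pi fun i ↦ .proj ⟨2 * i + 1, by lia⟩

theorem stdSymp_eq_sum (n : ℕ) (u v : Fin (2 * n) → ℝ) :
    stdSymp n u v = ∑ i, (momentum n u i * position n v i - position n u i * momentum n v i) :=
  rfl

/-- The standard symplectic form `stdSymp n` as a continuous bilinear form. -/
def stdSympCLM (n : ℕ) : (Fin (2 * n) → ℝ) →L[ℝ] (Fin (2 * n) → ℝ) →L[ℝ] ℝ :=
  ∑ i, (((ContinuousLinearMap.proj i).comp (momentum n)).smulRight
      ((ContinuousLinearMap.proj i).comp (position n)) -
    ((ContinuousLinearMap.proj i).comp (position n)).smulRight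
      ((ContinuousLinearMap.proj i).comp (momentum n)))

theorem stdSympCLM_apply (n : ℕ) (u v : Fin (2 * n) → ℝ) :
    stdSympCLM n u v = stdSymp n u v := by
  simp [stdSympCLM, stdSymp_eq_sum]

namespace LagrangianGerm

variable {n : ℕ} (L : LagrangianGerm n)

theorem contDiff_equations : ContDiff ℝ ∞ fun x i ↦ L.H i x := contDiff_pi.2 L.smooth

theorem fderiv_equations (x : Fin (2 * n) → ℝ) :
    fderiv ℝ (fun x i ↦ L.H i x) x = .pi fun i ↦ fderiv ℝ (L.H i) x :=
  fderiv_pi fun i ↦ (L.smooth i).differentiable (by simp) x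

theorem exists_eventually_abs_stdSymp_le :
    ∃ C : ℝ, ∀ᶠ x in 𝓝 0, ∀ u v, |stdSymp n u v| ≤
      C * (‖fun i ↦ L.H i x‖ * ‖u‖ * ‖v‖ + ‖fun i ↦ fderiv ℝ (L.H i) x u‖ * ‖v‖ +
        ‖u‖ * ‖fun i ↦ fderiv ℝ (L.H i) x v‖) := by
  obtain ⟨U, hU, h0U, hL⟩ := L.lagrangian
  obtain ⟨C, hC⟩ := eventually_abs_bilin_le_of_isotropic (stdSympCLM n) (x₀ := 0)
    (L.contDiff_equations.contDiffAt.of_le (WithTop.coe_le_coe.2 le_top))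
    (by
      rw [L.fderiv_equations]
      exact surjective_pi_of_linearIndependent (hL 0 h0U L.zero_at_zero).1)
    (funext L.zero_at_zero)
    (by
      filter_upwards [hU.mem_nhds h0U] with x hx hHx u v hu hv
      rw [L.fderiv_equations] at hu hv
      rw [stdSympCLM_apply]
      exact (hL x hx (congrFun hHx)).2 u v (congrFun hu) (congrFun hv))
  simp only [L.fderiv_equations, stdSympCLM_apply] at hC
  exact ⟨C, hC⟩

theorem stdSymp_isBigO {N : ℕ} {p u v : ℝ → Fin (2 * n) → ℝ} (hp : Tendsto p (𝓝 0) (𝓝 0))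
    (hu : u =O[𝓝 0] fun _ ↦ (1 : ℝ)) (hv : v =O[𝓝 0] fun _ ↦ (1 : ℝ))
    (hH : ∀ i, (fun t ↦ L.H i (p t)) =O[𝓝 0] fun t ↦ t ^ N)
    (hHu : ∀ i, (fun t ↦ fderiv ℝ (L.H i) (p t) (u t)) =O[𝓝 0] fun t ↦ t ^ N)
    (hHv : ∀ i, (fun t ↦ fderiv ℝ (L.H i) (p t) (v t)) =O[𝓝 0] fun t ↦ t ^ N) :
    (fun t ↦ stdSymp n (u t) (v t)) =O[𝓝 0] fun t ↦ t ^ N := by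
  obtain ⟨C, hC⟩ := L.exists_eventually_abs_stdSymp_le
  have hbound : (fun t ↦ stdSymp n (u t) (v t)) =O[𝓝 0] fun t ↦
      ‖fun i ↦ L.H i (p t)‖ * ‖u t‖ * ‖v t‖ + ‖fun i ↦ fderiv ℝ (L.H i) (p t) (u t)‖ * ‖v t‖ +
        ‖u t‖ * ‖fun i ↦ fderiv ℝ (L.H i) (p t) (v t)‖ := by
    refine .of_bound C ((hp.eventually hC).mono fun t ht ↦ (ht (u t) (v t)).trans_eq ?_)
    rw [Real.norm_of_nonneg (by positivity)]
  refine hbound.trans ((IsBigO.add ?_ ?_).add ?_)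
  · simpa using ((isBigO_pi.2 hH).norm_left.mul hu.norm_left).mul hv.norm_left
  · simpa using (isBigO_pi.2 hHu).norm_left.mul hv.norm_left
  · simpa using hu.norm_left.mul (isBigO_pi.2 hHv).norm_left

end LagrangianGerm

theorem stdSymp_tangent_isBigO_of_le_tOrd {n a b N : ℕ} {F : ℝ × ℝ → Fin (2 * n) → ℝ}
    (hF : ContDiff ℝ ∞ F) (hF0 : F 0 = 0) (hb : 0 < b) (hba : b ≤ a) (hab : a.Coprime b)
    (hN : N ≤ a * b) {L : LagrangianGerm n} (h : N ≤ tOrd (fun t ↦ F (t ^ a, t ^ b)) L) :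
    (fun t : ℝ ↦ stdSymp n (fderiv ℝ F (t ^ a, t ^ b) (1, 0)) (fderiv ℝ F (t ^ a, t ^ b) (0, 1)))
      =O[𝓝 0] fun t ↦ t ^ (N - a) := by
  have ha : 0 < a := hb.trans_le hba
  have hcurve : Continuous fun t : ℝ ↦ (t ^ a, t ^ b) := by fun_prop
  have hcurve0 : ((0 : ℝ) ^ a, (0 : ℝ) ^ b) = 0 := by simp [ha.ne', hb.ne']
  have hp : ContDiff ℝ ∞ fun t : ℝ ↦ F (t ^ a, t ^ b) := by fun_prop
  have hp0 : F ((0 : ℝ) ^ a, (0 : ℝ) ^ b) = 0 := by rw [hcurve0, hF0]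
  have hDF (w : ℝ × ℝ) : (fun t : ℝ ↦ fderiv ℝ F (t ^ a, t ^ b) w) =O[𝓝 0] fun _ ↦ (1 : ℝ) :=
    (((hF.continuous_fderiv (by simp)).comp hcurve).clm_apply
      continuous_const).continuousAt.isBigO_one ℝ
  have hK (i : Fin n) : ContDiff ℝ ∞ fun z ↦ L.H i (F z) := (L.smooth i).comp hF
  have hKO := (le_tOrd_iff_isBigO hp hp0 L).1 h
  have hchain (i : Fin n) (w z : ℝ × ℝ) :
      dirDeriv w (fun z ↦ L.H i (F z)) z = fderiv ℝ (L.H i) (F z) (fderiv ℝ F z w) := by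
    have := fderiv_fun_comp z ((L.smooth i).differentiable (by simp) (F z))
      (hF.differentiable (by simp) z)
    rw [dirDeriv, this]
    rfl
  refine L.stdSymp_isBigO (hp.continuous.tendsto' 0 0 hp0) (hDF _) (hDF _)
    (fun i ↦ (hKO i).trans (pow_isBigO_pow_nhds_zero (Nat.sub_le N a))) (fun i ↦ ?_) fun i ↦ ?_
  · simpa only [hchain] using
      dirDeriv_fst_comp_monomialCurve_isBigO ha hb hab hN (hK i) (hKO i)
  · simpa only [hchain] using
      (dirDeriv_snd_comp_monomialCurve_isBigO ha hb hab hN (hK i) (hKO i)).trans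
        (pow_isBigO_pow_nhds_zero (Nat.sub_le_sub_left hba N))

/-- The linear embedding of `ℝ³` into `ℝ^{2n}` as the subspace of the coordinates
`(p₁, q₁, p₂)`. -/
def embedPQP (n : ℕ) : ℝ × ℝ × ℝ →L[ℝ] Fin (2 * n) → ℝ :=
  .pi fun j ↦ if (j : ℕ) = 0 then .fst ℝ ℝ (ℝ × ℝ)
    else if (j : ℕ) = 1 then (.comp (.fst ℝ ℝ ℝ) (.snd ℝ ℝ (ℝ × ℝ)))
    else if (j : ℕ) = 2 then (.comp (.snd ℝ ℝ ℝ) (.snd ℝ ℝ (ℝ × ℝ))) else 0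

theorem embedPQP_apply (n : ℕ) (x q y : ℝ) (j : Fin (2 * n)) :
    embedPQP n (x, q, y) j =
      if (j : ℕ) = 0 then x else if (j : ℕ) = 1 then q else if (j : ℕ) = 2 then y else 0 := by
  simp only [embedPQP, ContinuousLinearMap.pi_apply]
  split_ifs <;> rfl

theorem momentum_embedPQP {n : ℕ} (x q y : ℝ) (i : Fin n) :
    momentum n (embedPQP n (x, q, y)) i =
      if (i : ℕ) = 0 then x else if (i : ℕ) = 1 then y else 0 := by
  simp only [momentum, ContinuousLinearMap.pi_apply, ContinuousLinearMap.proj_apply, embedPQP_apply]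
  split_ifs <;> first | rfl | lia

theorem position_embedPQP {n : ℕ} (x q y : ℝ) (i : Fin n) :
    position n (embedPQP n (x, q, y)) i = if (i : ℕ) = 0 then q else 0 := by
  simp only [position, ContinuousLinearMap.pi_apply, ContinuousLinearMap.proj_apply, embedPQP_apply]
  split_ifs <;> first | rfl | lia

theorem stdSymp_embedPQP {n : ℕ} (hn : 0 < n) (x q y x' q' y' : ℝ) :
    stdSymp n (embedPQP n (x, q, y)) (embedPQP n (x', q', y')) = x * q' - q * x' := by
  rw [stdSymp_eq_sum, Finset.sum_eq_single_of_mem ⟨0, hn⟩ (Finset.mem_univ _)]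
  · simp [momentum_embedPQP, position_embedPQP]
  · intro i _ hi
    have : (i : ℕ) ≠ 0 := fun h ↦ hi (Fin.ext h)
    simp [position_embedPQP, this]

/-- The surface `{q₁ = s(p₁, p₂)}` in the space of the coordinates `(p₁, q₁, p₂)`, parametrized
by `(p₁, p₂)`. -/
def graphSurface (n : ℕ) (s : ℝ × ℝ → ℝ) (z : ℝ × ℝ) : Fin (2 * n) → ℝ :=
  embedPQP n (z.1, s z, z.2)

section GraphSurface

variable {n : ℕ} {s : ℝ × ℝ → ℝ}

theorem contDiff_graphSurface (hs : ContDiff ℝ ∞ s) : ContDiff ℝ ∞ (graphSurface n s) := by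
  unfold graphSurface
  fun_prop

theorem graphSurface_zero (hs0 : s 0 = 0) : graphSurface n s 0 = 0 := by
  rw [graphSurface, hs0]
  exact map_zero _

theorem fderiv_graphSurface (hs : ContDiff ℝ ∞ s) (z w : ℝ × ℝ) :
    fderiv ℝ (graphSurface n s) z w = embedPQP n (w.1, fderiv ℝ s z w, w.2) := by
  have hinner : HasFDerivAt (fun z : ℝ × ℝ ↦ (z.1, s z, z.2)) _ z :=
    hasFDerivAt_fst.prodMk ((hs.differentiable (by simp) z).hasFDerivAt.prodMk hasFDerivAt_snd)
  have := ((embedPQP n).hasFDerivAt.comp z hinner).fderiv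
  exact congrArg (· w) this

theorem stdSymp_fderiv_graphSurface (hn : 0 < n) (hs : ContDiff ℝ ∞ s) (z : ℝ × ℝ) :
    stdSymp n (fderiv ℝ (graphSurface n s) z (1, 0)) (fderiv ℝ (graphSurface n s) z (0, 1)) =
      dirDeriv (0, 1) s z := by
  simp [fderiv_graphSurface hs, stdSymp_embedPQP hn, dirDeriv]

theorem lt1_graphSurface_le {a b N : ℕ} (hn : 0 < n) (hs : ContDiff ℝ ∞ s) (hs0 : s 0 = 0)
    (hb : 0 < b) (hba : b ≤ a) (hab : a.Coprime b) (hN : N < a * b)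
    (hO : ¬(fun t : ℝ ↦ dirDeriv (0, 1) s (t ^ a, t ^ b)) =O[𝓝 0] fun t ↦ t ^ (N + 1 - a)) :
    Lt1 (fun t ↦ graphSurface n s (t ^ a, t ^ b)) ≤ N := by
  refine iSup_le fun L ↦ le_of_not_gt fun hlt ↦ hO ?_
  have hle : ((N + 1 : ℕ) : ℕ∞) ≤ tOrd (fun t ↦ graphSurface n s (t ^ a, t ^ b)) L := by
    exact_mod_cast Order.add_one_le_of_lt hlt
  simpa only [stdSymp_fderiv_graphSurface hn hs] using stdSymp_tangent_isBigO_of_le_tOrd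
    (contDiff_graphSurface hs) (graphSurface_zero hs0) hb hba hab hN hle

end GraphSurface

/-! ### Lower bounds from generating functions -/

section GeneratingFunction

variable {n : ℕ} {S : (Fin n → ℝ) → ℝ}

/-- The equations `qᵢ - ∂S/∂pᵢ(p) = 0` of the Lagrangian graph `{q = ∇S(p)}` with generating
function `S`. -/
def gradientGraphEquation (S : (Fin n → ℝ) → ℝ) (i : Fin n) (x : Fin (2 * n) → ℝ) : ℝ :=
  position n x i - dirDeriv (Pi.single i 1) S (momentum n x)

theorem contDiff_gradientGraphEquation (hS : ContDiff ℝ ∞ S) (i : Fin n) :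
    ContDiff ℝ ∞ (gradientGraphEquation S i) := by
  have := contDiff_dirDeriv (Pi.single i 1) hS
  unfold gradientGraphEquation
  fun_prop

theorem fderiv_gradientGraphEquation (hS : ContDiff ℝ ∞ S) (i : Fin n) (x u : Fin (2 * n) → ℝ) :
    fderiv ℝ (gradientGraphEquation S i) x u =
      position n u i - fderiv ℝ (fderiv ℝ S) (momentum n x) (momentum n u) (Pi.single i 1) := by
  have hposition : HasFDerivAt (fun x ↦ position n x i)
      ((ContinuousLinearMap.proj i).comp (position n)) x :=
    ((ContinuousLinearMap.proj i).comp (position n)).hasFDerivAt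
  have hgradient : HasFDerivAt (dirDeriv (Pi.single i 1) S) _ (momentum n x) :=
    ((contDiff_dirDeriv _ hS).differentiable (by simp) _).hasFDerivAt
  have := (hposition.sub (hgradient.comp x (momentum n).hasFDerivAt)).fderiv
  rw [← fderiv_dirDeriv hS]
  exact congrArg (· u) this

theorem linearIndependent_fderiv_gradientGraphEquation (hS : ContDiff ℝ ∞ S)
    (x : Fin (2 * n) → ℝ) :
    LinearIndependent ℝ fun i ↦ fderiv ℝ (gradientGraphEquation S i) x := by
  refine Fintype.linearIndependent_iff.2 fun c hc k ↦ ?_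
  have hmomentum : momentum n (Pi.single ⟨2 * k + 1, by lia⟩ 1) = 0 := by
    ext i
    simpa [momentum, Pi.single_apply] using by lia
  have hposition (i : Fin n) :
      position n (Pi.single ⟨2 * k + 1, by lia⟩ 1) i = if i = k then 1 else 0 := by
    simp [position, Pi.single_apply, Fin.ext_iff]
  simpa [fderiv_gradientGraphEquation hS, hmomentum, hposition] using
    DFunLike.congr_fun hc (Pi.single ⟨2 * k + 1, by lia⟩ 1)

theorem stdSymp_eq_zero_of_fderiv_gradientGraphEquation (hS : ContDiff ℝ ∞ S)
    {x u v : Fin (2 * n) → ℝ} (hu : ∀ i, fderiv ℝ (gradientGraphEquation S i) x u = 0)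
    (hv : ∀ i, fderiv ℝ (gradientGraphEquation S i) x v = 0) : stdSymp n u v = 0 := by
  simp only [fderiv_gradientGraphEquation hS, sub_eq_zero] at hu hv
  have hsum (A : (Fin n → ℝ) →L[ℝ] ℝ) (p : Fin n → ℝ) :
      ∑ i, p i * A (Pi.single i 1) = A p := by
    conv_rhs => rw [pi_eq_sum_univ' p, map_sum]
    simp
  calc stdSymp n u v
      = fderiv ℝ (fderiv ℝ S) (momentum n x) (momentum n v) (momentum n u) -
        fderiv ℝ (fderiv ℝ S) (momentum n x) (momentum n u) (momentum n v) := by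
        simp only [stdSymp_eq_sum, hu, hv, Finset.sum_sub_distrib, hsum,
          mul_comm _ (momentum n v _)]
    _ = 0 := by
        rw [← fderiv_dirDeriv hS, ← fderiv_dirDeriv hS, sub_eq_zero]
        exact congrFun (dirDeriv_comm hS _ _) _

/-- The germ at `0` of the Lagrangian graph `{q = ∇S(p)}` of a generating function `S` with a
critical point at `0`. -/
def gradientGraph (S : (Fin n → ℝ) → ℝ) (hS : ContDiff ℝ ∞ S) (hS0 : fderiv ℝ S 0 = 0) :
    LagrangianGerm n where
  H := gradientGraphEquation S
  smooth := contDiff_gradientGraphEquation hS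
  zero_at_zero i := by simp [gradientGraphEquation, dirDeriv, hS0]
  lagrangian := ⟨Set.univ, isOpen_univ, Set.mem_univ 0, fun x _ _ ↦
    ⟨linearIndependent_fderiv_gradientGraphEquation hS x, fun _ _ hu hv ↦
      stdSymp_eq_zero_of_fderiv_gradientGraphEquation hS hu hv⟩⟩

end GeneratingFunction

section PlanarGeneratingFunction

variable {n : ℕ} {σ : ℝ × ℝ → ℝ}

/-- The projection `(p₁, …, pₙ) ↦ (p₁, p₂)`. -/
def firstTwo (hn : 2 ≤ n) : (Fin n → ℝ) →L[ℝ] ℝ × ℝ :=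
  (ContinuousLinearMap.proj ⟨0, by lia⟩).prod (ContinuousLinearMap.proj ⟨1, by lia⟩)

theorem firstTwo_momentum_graphSurface (hn : 2 ≤ n) (s : ℝ × ℝ → ℝ) (z : ℝ × ℝ) :
    firstTwo hn (momentum n (graphSurface n s z)) = z := by
  simp [firstTwo, graphSurface, momentum_embedPQP]

theorem firstTwo_single (hn : 2 ≤ n) (i : Fin n) :
    firstTwo hn (Pi.single i 1) =
      if (i : ℕ) = 0 then (1, 0) else if (i : ℕ) = 1 then (0, 1) else 0 := by
  simp only [firstTwo, ContinuousLinearMap.prod_apply, ContinuousLinearMap.proj_apply,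
    Pi.single_apply, Fin.ext_iff]
  split_ifs <;> first | rfl | lia

theorem gradientGraphEquation_firstTwo_graphSurface (hn : 2 ≤ n) (hσ : Differentiable ℝ σ)
    (i : Fin n) (z : ℝ × ℝ) :
    gradientGraphEquation (fun p ↦ σ (firstTwo hn p)) i (graphSurface n (dirDeriv (1, 0) σ) z) =
      if (i : ℕ) = 1 then -dirDeriv (0, 1) σ z else 0 := by
  have hchain (p : Fin n → ℝ) : dirDeriv (Pi.single i 1) (fun p ↦ σ (firstTwo hn p)) p =
      fderiv ℝ σ (firstTwo hn p) (firstTwo hn (Pi.single i 1)) := by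
    have := fderiv_fun_comp p (hσ (firstTwo hn p)) (firstTwo hn).differentiableAt
    rw [dirDeriv, this, (firstTwo hn).fderiv]
    rfl
  rw [gradientGraphEquation, hchain, firstTwo_momentum_graphSurface, firstTwo_single,
    graphSurface, position_embedPQP]
  split_ifs <;> first | lia | simp [dirDeriv]

theorem le_lt1_graphSurface_dirDeriv {a b N : ℕ} (hn : 2 ≤ n) (hσ : ContDiff ℝ ∞ σ)
    (hσ0 : fderiv ℝ σ 0 = 0) (ha : a ≠ 0) (hb : b ≠ 0)
    (hO : (fun t : ℝ ↦ dirDeriv (0, 1) σ (t ^ a, t ^ b)) =O[𝓝 0] fun t ↦ t ^ N) :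
    N ≤ Lt1 (fun t ↦ graphSurface n (dirDeriv (1, 0) σ) (t ^ a, t ^ b)) := by
  have hS : ContDiff ℝ ∞ fun p ↦ σ (firstTwo hn p) := hσ.comp (firstTwo hn).contDiff
  have hS0 : fderiv ℝ (fun p ↦ σ (firstTwo hn p)) 0 = 0 := by
    rw [fderiv_fun_comp 0 (hσ.differentiable (by simp) _) (firstTwo hn).differentiableAt,
      map_zero, hσ0, ContinuousLinearMap.zero_comp]
  have hcurve : ContDiff ℝ ∞ fun t : ℝ ↦ graphSurface n (dirDeriv (1, 0) σ) (t ^ a, t ^ b) :=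
    (contDiff_graphSurface (contDiff_dirDeriv _ hσ)).comp (by fun_prop)
  have hcurve0 : graphSurface n (dirDeriv (1, 0) σ) ((0 : ℝ) ^ a, (0 : ℝ) ^ b) = 0 := by
    rw [zero_pow ha, zero_pow hb]
    exact graphSurface_zero (by simp [dirDeriv, hσ0])
  refine ((le_tOrd_iff_isBigO hcurve hcurve0 (gradientGraph _ hS hS0)).2 fun i ↦ ?_).trans
    (le_iSup _ _)
  simp only [gradientGraph,
    gradientGraphEquation_firstTwo_graphSurface hn (hσ.differentiable (by simp))]
  split_ifs
  exacts [hO.neg_left, isBigO_zero _ _]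

end PlanarGeneratingFunction

/-! ### The curves of type `E₆` -/

section E6

/-- The generating function `(c/3) xy³ + (d/4) x²y²`. Its derivative in `x` is
`(c/3) y³ + (d/2) xy²`, and the curve over `(t⁴, t³)` in the graph of the latter is the normal form
of `E₆³` for `c = 1`, `d = b`, and of `E₆⁴±` for `c = 0`, `d = ±1`. -/
def e6Generating (c d : ℝ) : ℝ × ℝ → ℝ :=
  fun z ↦ c / 3 * (z.1 * z.2 ^ 3) + d / 4 * (z.1 ^ 2 * z.2 ^ 2)

variable {n : ℕ} (c d : ℝ)

theorem contDiff_e6Generating : ContDiff ℝ ∞ (e6Generating c d) := by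
  unfold e6Generating
  fun_prop

theorem fderiv_e6Generating (z w : ℝ × ℝ) :
    fderiv ℝ (e6Generating c d) z w =
      (c / 3 * z.2 ^ 3 + d / 2 * (z.1 * z.2 ^ 2)) * w.1 +
        (c * (z.1 * z.2 ^ 2) + d / 2 * (z.1 ^ 2 * z.2)) * w.2 := by
  unfold e6Generating
  simp (disch := fun_prop) only [fderiv_fun_add, fderiv_fun_mul, fderiv_fun_pow, fderiv_fst,
    fderiv_snd, fderiv_fun_const]
  simp only [Nat.add_one_sub_one, nsmul_eq_mul, Nat.cast_ofNat, smul_add, Pi.zero_apply,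
    smul_zero, add_zero, pow_one, add_apply, smul_apply, ContinuousLinearMap.coe_snd',
    smul_eq_mul, ContinuousLinearMap.coe_fst']
  ring

theorem fderiv_e6Generating_zero : fderiv ℝ (e6Generating c d) 0 = 0 := by
  ext <;> simp [fderiv_e6Generating]

theorem dirDeriv_fst_e6Generating :
    dirDeriv (1, 0) (e6Generating c d) = fun z ↦ c / 3 * z.2 ^ 3 + d / 2 * (z.1 * z.2 ^ 2) := by
  funext z
  simp [dirDeriv, fderiv_e6Generating]

theorem dirDeriv_snd_e6Generating_curve (t : ℝ) :
    dirDeriv (0, 1) (e6Generating c d) (t ^ 4, t ^ 3) = c * t ^ 10 + d / 2 * t ^ 11 := by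
  simp only [dirDeriv, fderiv_e6Generating]
  ring

theorem dirDeriv_snd_dirDeriv_fst_e6Generating_curve (t : ℝ) :
    dirDeriv (0, 1) (dirDeriv (1, 0) (e6Generating c d)) (t ^ 4, t ^ 3) =
      c * t ^ 6 + d * t ^ 7 := by
  rw [dirDeriv_fst_e6Generating, dirDeriv]
  simp (disch := fun_prop) only [fderiv_fun_add, fderiv_fun_mul, fderiv_fun_pow, fderiv_fst,
    fderiv_snd, fderiv_fun_const]
  simp only [Nat.add_one_sub_one, nsmul_eq_mul, Nat.cast_ofNat, smul_add, Pi.zero_apply,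
    smul_zero, add_zero, pow_one, add_apply, smul_apply, ContinuousLinearMap.coe_snd',
    smul_eq_mul, ContinuousLinearMap.coe_fst', mul_one, mul_zero]
  ring

/-- The curve `(t⁴, (c/3) t⁹ + (d/2) t¹⁰, t³, 0, …, 0)`. -/
def e6Curve (n : ℕ) (c d t : ℝ) : Fin (2 * n) → ℝ :=
  graphSurface n (dirDeriv (1, 0) (e6Generating c d)) (t ^ 4, t ^ 3)

theorem e6Curve_apply (t : ℝ) (j : Fin (2 * n)) :
    e6Curve n c d t j = if (j : ℕ) = 0 then t ^ 4
      else if (j : ℕ) = 1 then c / 3 * t ^ 9 + d / 2 * t ^ 10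
      else if (j : ℕ) = 2 then t ^ 3 else 0 := by
  rw [e6Curve, graphSurface, embedPQP_apply, dirDeriv_fst_e6Generating]
  congr! 2
  ring

theorem le_lt1_e6Curve {N : ℕ} (hn : 2 ≤ n)
    (hO : (fun t : ℝ ↦ c * t ^ 10 + d / 2 * t ^ 11) =O[𝓝 0] fun t ↦ t ^ N) :
    N ≤ Lt1 (e6Curve n c d) := by
  simp only [← dirDeriv_snd_e6Generating_curve] at hO
  exact le_lt1_graphSurface_dirDeriv hn (contDiff_e6Generating c d)
    (fderiv_e6Generating_zero c d) four_ne_zero three_ne_zero hO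

theorem lt1_e6Curve_le {N : ℕ} (hn : 0 < n) (hN : N < 12)
    (hO : ¬(fun t : ℝ ↦ c * t ^ 6 + d * t ^ 7) =O[𝓝 0] fun t ↦ t ^ (N + 1 - 4)) :
    Lt1 (e6Curve n c d) ≤ N := by
  simp only [← dirDeriv_snd_dirDeriv_fst_e6Generating_curve] at hO
  refine lt1_graphSurface_le hn (contDiff_dirDeriv _ (contDiff_e6Generating c d)) ?_
    three_pos (by simp) (by norm_num) hN hO
  rw [dirDeriv, fderiv_e6Generating_zero, zero_apply]

variable {c d}

theorem lt1_e6Curve_eq_ten (hn : 2 ≤ n) (hc : c ≠ 0) : Lt1 (e6Curve n c d) = 10 := by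
  refine le_antisymm (lt1_e6Curve_le c d (by lia) (by simp) fun hO ↦ hc ?_)
    (le_lt1_e6Curve c d hn ?_)
  · have hd : (fun t : ℝ ↦ d * t ^ 7) =O[𝓝 0] fun t ↦ t ^ 7 := (isBigO_refl _ _).const_mul_left d
    exact eq_zero_of_const_mul_pow_isBigO ((hO.sub hd).congr_left fun t ↦ by ring)
  · exact ((isBigO_refl _ _).const_mul_left c).add
      ((pow_isBigO_pow_nhds_zero (by simp)).const_mul_left (d / 2))

theorem lt1_e6Curve_eq_eleven (hn : 2 ≤ n) (hd : d ≠ 0) : Lt1 (e6Curve n 0 d) = 11 := by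
  refine le_antisymm (lt1_e6Curve_le 0 d (by lia) (by simp) fun hO ↦ hd ?_)
    (le_lt1_e6Curve 0 d hn ?_)
  · exact eq_zero_of_const_mul_pow_isBigO (hO.congr_left fun t ↦ by ring)
  · simpa using (isBigO_refl _ _).const_mul_left (d / 2)

end E6

theorem E6_4pm_lagrangian_tangency_order_general
    (n : ℕ) (hn : 2 ≤ n) (ε : ℝ) (hε : ε ≠ 0)
    (f : ℝ → Fin (2 * n) → ℝ)
    (hf : f = fun (t : ℝ) (j : Fin (2 * n)) ↦ if (j : ℕ) = 0 then t ^ 4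
      else if (j : ℕ) = 1 then ε * (1 / 2) * t ^ 10
      else if (j : ℕ) = 2 then t ^ 3 else (0 : ℝ)) :
    Lt1 f = 11 ∧
    ∀ (b : ℝ) (g : ℝ → Fin (2 * n) → ℝ),
      g = (fun (t : ℝ) (j : Fin (2 * n)) ↦ if (j : ℕ) = 0 then t ^ 4
        else if (j : ℕ) = 1 then (1 / 3) * t ^ 9 + (b / 2) * t ^ 10
        else if (j : ℕ) = 2 then t ^ 3 else (0 : ℝ)) →
      Lt1 g = 10 := by
  have hf' : f = e6Curve n 0 ε := by
    rw [hf]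
    ext t j
    rw [e6Curve_apply]
    congr! 2
    ring
  refine ⟨hf' ▸ lt1_e6Curve_eq_eleven hn hε, fun b g hg ↦ ?_⟩
  have hg' : g = e6Curve n 1 b := by
    rw [hg]
    ext t j
    rw [e6Curve_apply]
  exact hg' ▸ lt1_e6Curve_eq_ten hn one_ne_zero

/-- The Lagrangian tangency order of the class `E₆⁴±` of the planar singularity `E₆` is `11`;
in particular the Lagrangian tangency order distinguishes the symplectic classes `E₆³`
(where it equals `10`) and `E₆⁴±`. -/
theorem E6_4pm_lagrangian_tangency_order
    (n : ℕ) (hn : 2 ≤ n) (ε : ℝ) (hε : ε = 1 ∨ ε = -1)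
    (f : ℝ → Fin (2 * n) → ℝ)
    (hf : f = fun (t : ℝ) (j : Fin (2 * n)) => if (j : ℕ) = 0 then t ^ 4 else if (j : ℕ) = 1 then ε * (1 / 2) * t ^ 10 else if (j : ℕ) = 2 then t ^ 3 else (0 : ℝ)) :
    Lt1 f = 11 ∧
    ∀ (b : ℝ) (g : ℝ → Fin (2 * n) → ℝ),
      g = (fun (t : ℝ) (j : Fin (2 * n)) => if (j : ℕ) = 0 then t ^ 4 else if (j : ℕ) = 1 then (1 / 3) * t ^ 9 + (b / 2) * t ^ 10 else if (j : ℕ) = 2 then t ^ 3 else (0 : ℝ)) →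
      Lt1 g ≠ Lt1 f := by
  obtain ⟨hf11, hg10⟩ := E6_4pm_lagrangian_tangency_order_general n hn ε
    (by rcases hε with rfl | rfl <;> norm_num) f hf
  exact ⟨hf11, fun b g hg ↦ by rw [hg10 b g hg, hf11]; norm_num⟩

end
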